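/- There is a computable map assigning to each tiling system 𝒞 = (C, C_H, C_V) a sentence η_𝒞 of FL²3T (the two-variable fluted fragment with three distinguished transitive relations) such that η_𝒞 is satisfiable (in a structure where the three distinguished relations are transitive) if and only if 𝒞 tiles ℕ × ℕ. -/

import Mathlib

/- STATEMENT 13: Reduction of the ℕ×ℕ tiling problem to satisfiability of FL²3T, the
two-variable fluted fragment (without equality) with three distinguished transitive
relations. -/

namespace FlutedThreeTrans

/-- FL² formulas over countably many unary predicates (indexed by `ℕ`) and three
distinguished binary predicates (indexed by `Fin 3`); the index `m ≤ 2` records that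
the free variables form a suffix of `x₁, …, x_m`, all atoms ending at the last
variable, and only the last variable may be quantified. -/
inductive F : ℕ → Type
  | patom (p : ℕ) {m : ℕ} (h1 : 1 ≤ m) (h2 : m ≤ 2) : F m
  | batom (k : Fin 3) : F 2
  | fls {m : ℕ} (h : m ≤ 2) : F m
  | not {m : ℕ} (φ : F m) : F m
  | and {m : ℕ} (φ ψ : F m) : F m
  | or {m : ℕ} (φ ψ : F m) : F m
  | imp {m : ℕ} (φ ψ : F m) : F m
  | ex {m : ℕ} (h : m ≤ 1) (φ : F (m + 1)) : F m
  | all {m : ℕ} (h : m ≤ 1) (φ : F (m + 1)) : F m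

/-- A structure interpreting the unary predicates and the three distinguished binary
predicates. -/
structure Str (A : Type) where
  U : ℕ → A → Prop
  T : Fin 3 → A → A → Prop

def Sat {A : Type} (M : Str A) : ∀ {m : ℕ}, F m → (Fin m → A) → Prop
  | m, .patom p h1 _, v => M.U p (v ⟨m - 1, by omega⟩)
  | _, .batom k, v => M.T k (v 0) (v 1)
  | _, .fls _, _ => False
  | _, .not φ, v => ¬ Sat M φ v
  | _, .and φ ψ, v => Sat M φ v ∧ Sat M ψ v
  | _, .or φ ψ, v => Sat M φ v ∨ Sat M ψ v
  | _, .imp φ ψ, v => Sat M φ v → Sat M ψ v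
  | _, .ex _ φ, v => ∃ a : A, Sat M φ (Fin.snoc v a)
  | _, .all _ φ, v => ∀ a : A, Sat M φ (Fin.snoc v a)

/-- `φ` has a model in which all three distinguished binary relations are
transitive. -/
def Satisfiable (φ : F 0) : Prop :=
  ∃ (A : Type) (_ : Nonempty A) (M : Str A),
    (∀ k, Transitive (M.T k)) ∧ Sat M φ (fun i => i.elim0)

/-- A concrete Gödel numbering of FL²3T-formulas. -/
def encode : ∀ {m : ℕ}, F m → ℕ
  | _, .patom p _ _ => Nat.pair 0 p
  | _, .batom k => Nat.pair 1 k.val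
  | _, .fls _ => Nat.pair 2 0
  | _, .not φ => Nat.pair 3 (encode φ)
  | _, .and φ ψ => Nat.pair 4 (Nat.pair (encode φ) (encode ψ))
  | _, .or φ ψ => Nat.pair 5 (Nat.pair (encode φ) (encode ψ))
  | _, .imp φ ψ => Nat.pair 6 (Nat.pair (encode φ) (encode ψ))
  | _, .ex _ φ => Nat.pair 7 (encode φ)
  | _, .all _ φ => Nat.pair 8 (encode φ)


/-- A tiling system: a finite set of tiles `Fin n` together with horizontal and
vertical constraints. -/
structure TileSys where
  n : ℕ
  H : Fin n → Fin n → Bool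
  V : Fin n → Fin n → Bool

/-- `𝒞` tiles `ℕ × ℕ`. -/
def TileSys.TilesNat (T : TileSys) : Prop :=
  ∃ ρ : ℕ × ℕ → Fin T.n, ∀ p q : ℕ,
    T.H (ρ (p, q)) (ρ (p + 1, q)) = true ∧ T.V (ρ (p, q)) (ρ (p, q + 1)) = true

/-- A concrete Gödel numbering of tiling systems. -/
def TileSys.encode (T : TileSys) : ℕ :=
  Nat.pair T.n
    (Nat.pair (∑ i : Fin T.n, ∑ j : Fin T.n,
        if T.H i j then 2 ^ (i.val * T.n + j.val) else 0)
      (∑ i : Fin T.n, ∑ j : Fin T.n,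
        if T.V i j then 2 ^ (i.val * T.n + j.val) else 0))

/-!
A model contains a path, the snake, that fills the rows `0, 1, 2, …` of a growing triangle
alternately from left to right and from right to left, so that each row is run through backwards
above the previous one. Its points are labelled with their horizontal positions modulo 3, and
consecutive points are joined by the relations indexed by their positions. Where the snake turns at
the end of a row, transitivity joins the last cell of the row to the first cell of the next row,
which lies above it. If a cell is joined to the cell above it, then by transitivity also to the link
that follows there; the sentence demands that it be joined to that link by a second relation, the
one that joins the preceding cell of its own row to it. By transitivity again, that preceding cell
is joined to the next cell of the upper row, which lies above it. Thus all vertically adjacent cells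
are joined, and the constraints can be imposed on them.

The triangle contains arbitrarily large parts of the quarter plane and is itself contained in the
upper half-plane, so compactness passes between tilings of these regions.
-/

/-- The unary labels of the points of the snake: a `cell` carries a tile, a `link` joins two
consecutive cells of a row, a `turn` joins the last cell of a row to the first cell of the next one.
A label records the horizontal position `x` modulo 3 and the direction `s` in which its row is
traversed, and flags for the first and last cell of a row; the flag of a link says whether it leads
to the last cell. -/
inductive Label
  | cell (x : ZMod 3) (s : ℤˣ) (isFirst isLast : Bool)
  | link (x : ZMod 3) (s : ℤˣ) (toLast : Bool)
  | turn (x : ZMod 3) (s : ℤˣ)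
  deriving Fintype

namespace Label

/-- The horizontal position, modulo 3, recorded by a label. -/
def pos : Label → ZMod 3
  | cell x _ _ _ => x
  | link x _ _ => x
  | turn x _ => x

/-- The label following a given one along the snake. Only the flag of a link that follows a cell is
left open; it is passed as a guess. -/
def next : Label → Bool → Label
  | cell x s _ false, guess => link (x + (s : ℤ)) s guess
  | cell x s _ true, _ => turn (x + (s : ℤ)) s
  | link x s toLast, _ => cell (x + (s : ℤ)) s false toLast
  | turn x s, _ => cell x (-s) true false

lemma pos_next_cell (x : ZMod 3) (s : ℤˣ) (isFirst isLast guess : Bool) :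
    ((cell x s isFirst isLast).next guess).pos = x + (s : ℤ) := by
  cases isLast <;> rfl

end Label

/-- The properties of labels `P` and relations `R` that force a snake-like path filling the rows
`0, 1, 2, …` of a growing triangle. Consecutive points are related by the relations indexed by both
of their positions. -/
structure SnakeAxioms {A : Type*} (P : Label → A → Prop) (R : ZMod 3 → A → A → Prop) : Prop where
  exists_start : ∃ a, P (.cell 0 1 true true) a
  exists_next : ∀ l a, P l a → ∃ b guess,
    P (l.next guess) b ∧ R l.pos a b ∧ R (l.next guess).pos a b
  link_above : ∀ (x : ZMod 3) (s : ℤˣ) (isFirst isLast toLast : Bool) (a b : A),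
    P (.cell x s isFirst isLast) a → R (x + (s : ℤ)) a b → P (.link x (-s) toLast) b →
      isFirst = toLast ∧ R (x - (s : ℤ)) a b

/-- A sequence `a` of points with labels `l` obtained by following `SnakeAxioms.exists_next`. -/
structure IsSnake {A : Type*} (P : Label → A → Prop) (R : ZMod 3 → A → A → Prop)
    (l : ℕ → Label) (a : ℕ → A) : Prop where
  label_zero : l 0 = .cell 0 1 true true
  label_succ : ∀ n, ∃ guess, l (n + 1) = (l n).next guess
  holds : ∀ n, P (l n) (a n)
  rel : ∀ n, R (l n).pos (a n) (a (n + 1))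
  rel_succ : ∀ n, R (l (n + 1)).pos (a n) (a (n + 1))

/-- The direction in which row `k` is traversed. -/
def rowSign (k : ℕ) : ℤˣ := (-1) ^ k

/-- The absolute horizontal position of the `i`-th point of row `k`. The cells of the row are its
points with even index `i ≤ 2 * k`; position `0` is at the middle one of the points
`0, …, 2 * k`. -/
def rowPos (k i : ℕ) : ℤ := rowSign k * (i - k)

/-- The label of the `m`-th cell of row `k`, where `m ≤ k`. -/
def cellLabel (k m : ℕ) : Label :=
  .cell (rowPos k (2 * m) : ℤ) (rowSign k) (m = 0) (m = k)

lemma rowSign_succ (k : ℕ) : rowSign (k + 1) = -rowSign k := by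
  simp [rowSign, pow_succ]

lemma rowSign_eq_one_or (k : ℕ) :
    k % 2 = 0 ∧ rowSign k = 1 ∨ k % 2 = 1 ∧ rowSign k = -1 := by
  rcases Nat.even_or_odd k with hk | hk
  · exact .inl ⟨Nat.even_iff.1 hk, hk.neg_one_pow⟩
  · exact .inr ⟨Nat.odd_iff.1 hk, hk.neg_one_pow⟩

lemma rowPos_succ (k i : ℕ) : rowPos k (i + 1) = rowPos k i + rowSign k := by
  simp only [rowPos]; push_cast; ring

lemma rowPos_succ_row {k i j : ℕ} (h : i + j = 2 * k + 1) : rowPos (k + 1) j = rowPos k i := by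
  have hj : (j : ℤ) = 2 * k + 1 - i := by lia
  simp only [rowPos, rowSign_succ, Units.val_neg, hj]; push_cast; ring

section Snake

variable {A : Type*} {P : Label → A → Prop} {R : ZMod 3 → A → A → Prop}

lemma SnakeAxioms.exists_isSnake (h : SnakeAxioms P R) : ∃ l a, IsSnake P R l a := by
  have step (u : {u : Label × A // P u.1 u.2}) : ∃ v : {u : Label × A // P u.1 u.2},
      (∃ guess, v.1.1 = u.1.1.next guess) ∧ R u.1.1.pos u.1.2 v.1.2 ∧ R v.1.1.pos u.1.2 v.1.2 := by
    obtain ⟨b, guess, hb, hR⟩ := h.exists_next _ _ u.2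
    exact ⟨⟨(_, b), hb⟩, ⟨guess, rfl⟩, hR⟩
  choose f label_f rel_f rel_f_succ using step
  obtain ⟨a₀, ha₀⟩ := h.exists_start
  let u (n : ℕ) := f^[n] ⟨(_, a₀), ha₀⟩
  have u_succ (n : ℕ) : u (n + 1) = f (u n) := Function.iterate_succ_apply' f n _
  refine ⟨fun n ↦ (u n).1.1, fun n ↦ (u n).1.2, rfl, fun n ↦ ?_, fun n ↦ (u n).2,
    fun n ↦ ?_, fun n ↦ ?_⟩ <;> simp only [u_succ]
  exacts [label_f _, rel_f _, rel_f_succ _]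

namespace IsSnake

variable {l : ℕ → Label} {a : ℕ → A} {n n' : ℕ} {x : ZMod 3} {s : ℤˣ}
  {isFirst isLast isFirst' : Bool}

lemma pos_succ_of_cell (h : IsSnake P R l a) (hn : l n = .cell x s isFirst isLast) :
    (l (n + 1)).pos = x + (s : ℤ) := by
  obtain ⟨guess, hg⟩ := h.label_succ n
  rw [hg, hn, Label.pos_next_cell]

lemma label_add_two_of_last (h : IsSnake P R l a) (hn : l n = .cell x s isFirst true) :
    l (n + 2) = .cell (x + (s : ℤ)) (-s) true false := by
  obtain ⟨_, h₁⟩ := h.label_succ n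
  obtain ⟨_, h₂⟩ := h.label_succ (n + 1)
  rw [h₂, h₁, hn]; rfl

lemma rel_add_two (h : IsSnake P R l a) [∀ c, IsTrans A (R c)]
    (hn : l n = .cell x s isFirst isLast) : R (x + (s : ℤ)) (a n) (a (n + 2)) := by
  have h₁ := h.rel_succ n
  have h₂ := h.rel (n + 1)
  rw [h.pos_succ_of_cell hn] at h₁ h₂
  exact _root_.trans h₁ h₂

/-- If the cell `n'` lies above the cell `n`, then the link following `n'` is related to `n` by
transitivity, so that `SnakeAxioms.link_above` relates the two along `x - s` as well. -/
lemma cell_above (h : IsSnake P R l a) (hP : SnakeAxioms P R) [∀ c, IsTrans A (R c)]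
    (hn : l n = .cell x s isFirst isLast)
    (hn' : l n' = .cell (x + (s : ℤ)) (-s) isFirst' false)
    (hrel : R (x + (s : ℤ)) (a n) (a n')) :
    l (n' + 2) = .cell (x - (s : ℤ)) (-s) false isFirst ∧
      R (x - (s : ℤ)) (a n) (a (n' + 2)) := by
  obtain ⟨toLast, hlink⟩ := h.label_succ n'
  obtain ⟨_, hcell⟩ := h.label_succ (n' + 1)
  simp only [hn', Label.next, Units.val_neg, Int.cast_neg, add_neg_cancel_right] at hlink
  simp only [hlink, Label.next, Units.val_neg, Int.cast_neg, ← sub_eq_add_neg] at hcell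
  have hrel_link : R (x + (s : ℤ)) (a n) (a (n' + 1)) := by
    have := h.rel n'
    rw [hn'] at this
    exact _root_.trans hrel this
  obtain ⟨rfl, hrel_link'⟩ := hP.link_above _ _ _ _ _ _ _ (hn ▸ h.holds n) hrel_link
    (hlink ▸ h.holds (n' + 1))
  have hrel_next := h.rel_succ (n' + 1)
  rw [hcell] at hrel_next
  exact ⟨hcell, _root_.trans hrel_link' hrel_next⟩

end IsSnake

/-- The place along the snake of the `m`-th cell of row `k`. -/
def cellIndex (k m : ℕ) : ℕ := k * (k + 1) + 2 * m

lemma cellIndex_succ (k m : ℕ) : cellIndex k (m + 1) = cellIndex k m + 2 := by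
  simp only [cellIndex]; ring

lemma cellIndex_succ_row (k : ℕ) : cellIndex (k + 1) 0 = cellIndex k k + 2 := by
  simp only [cellIndex]; ring

namespace IsSnake

variable {l : ℕ → Label} {a : ℕ → A}

/-- Row `k + 1` runs back above row `k`, so its cells are met in the order opposite to those of
row `k`. -/
lemma row_above (h : IsSnake P R l a) (hP : SnakeAxioms P R) [∀ c, IsTrans A (R c)] {k : ℕ}
    (hk : ∀ m ≤ k, l (cellIndex k m) = cellLabel k m) (m' : ℕ) :
    ∀ m, m + m' = k → l (cellIndex (k + 1) m') = cellLabel (k + 1) m' ∧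
      R (rowPos k (2 * m + 1) : ℤ) (a (cellIndex k m)) (a (cellIndex (k + 1) m')) := by
  induction m' with
  | zero =>
    rintro m rfl
    have hm := hk m le_rfl
    rw [add_zero, cellIndex_succ_row, rowPos_succ, Int.cast_add]
    refine ⟨?_, h.rel_add_two hm⟩
    rw [h.label_add_two_of_last (by simpa [cellLabel] using hm)]
    simp [cellLabel, rowSign_succ, rowPos_succ_row (show 2 * m + 1 + 0 = 2 * m + 1 by rfl),
      rowPos_succ]
  | succ m' ih =>
    intro m hm
    obtain ⟨hlabel, hrel⟩ := ih (m + 1) (by lia)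
    have hpos : (rowPos k (2 * m + 1) : ZMod 3) = rowPos k (2 * (m + 1)) - (rowSign k : ℤ) := by
      simp [mul_add, rowPos_succ]
    have hlast : ¬ m' = k + 1 := by lia
    rw [cellLabel, rowPos_succ_row (show 2 * (m + 1) + 1 + 2 * m' = 2 * k + 1 by lia),
      rowSign_succ, decide_eq_false hlast, rowPos_succ, Int.cast_add] at hlabel
    rw [rowPos_succ, Int.cast_add] at hrel
    obtain ⟨hlabel', hrel'⟩ := h.cell_above hP (hk (m + 1) (by lia)) hlabel hrel
    have hrow := h.rel_add_two (hk m (by lia))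
    rw [← cellIndex_succ, ← Int.cast_add, ← rowPos_succ, hpos] at hrow
    rw [cellIndex_succ (k + 1), hpos]
    refine ⟨?_, _root_.trans hrow hrel'⟩
    rw [hlabel', cellLabel, rowPos_succ_row (show 2 * m + 1 + 2 * (m' + 1) = 2 * k + 1 by lia),
      hpos, rowSign_succ]
    simp [show ¬ m' = k by lia]

lemma label_cellIndex (h : IsSnake P R l a) (hP : SnakeAxioms P R) [∀ c, IsTrans A (R c)]
    (k : ℕ) : ∀ m ≤ k, l (cellIndex k m) = cellLabel k m := by
  induction k with
  | zero =>
    rintro m hm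
    obtain rfl : m = 0 := by lia
    simp [cellIndex, h.label_zero, cellLabel, rowPos, rowSign]
  | succ k ih =>
    intro m hm
    have habove := h.row_above hP ih
    rcases hm.lt_or_eq with hm | rfl
    · exact (habove m (k - m) (by lia)).1
    · obtain ⟨hlabel, hrel⟩ := habove k 0 (by lia)
      have hpos : rowPos (k + 1) (2 * k) = rowPos k (2 * 0) + rowSign k := by
        rw [rowPos_succ_row (show 1 + 2 * k = 2 * k + 1 by lia), ← rowPos_succ]
      have hpos' : rowPos (k + 1) (2 * (k + 1)) = rowPos k (2 * 0) - rowSign k := by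
        simp only [mul_add, mul_one, rowPos_succ, hpos, rowSign_succ, Units.val_neg]; ring
      rw [cellLabel, hpos, rowSign_succ, decide_eq_false (by lia : ¬ k = k + 1),
        Int.cast_add] at hlabel
      rw [rowPos_succ, Int.cast_add] at hrel
      rw [cellIndex_succ, (h.cell_above hP (ih 0 (by lia)) hlabel hrel).1, cellLabel, hpos',
        rowSign_succ]
      simp

end IsSnake

theorem SnakeAxioms.exists_grid (h : SnakeAxioms P R) [∀ c, IsTrans A (R c)] :
    ∃ e : ℕ → ℕ → A, (∀ k m, m ≤ k → P (cellLabel k m) (e k m)) ∧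
      (∀ k m, m < k → R (rowPos k (2 * m + 1) : ℤ) (e k m) (e k (m + 1))) ∧
      ∀ k m m', m + m' = k → R (rowPos k (2 * m + 1) : ℤ) (e k m) (e (k + 1) m') := by
  obtain ⟨l, a, hs⟩ := h.exists_isSnake
  have hl := hs.label_cellIndex h
  refine ⟨fun k m ↦ a (cellIndex k m), fun k m hm ↦ hl k m hm ▸ hs.holds _, fun k m hm ↦ ?_,
    fun k m m' hm ↦ (hs.row_above h (hl k) m' m hm).2⟩
  dsimp only
  rw [cellIndex_succ, rowPos_succ, Int.cast_add]
  exact hs.rel_add_two (hl k m hm.le)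

end Snake

/-! ### From the grid to a tiling -/

/-- The labels of two cells in rows of directions `s` and `s'`, with the index of the relation that
joins the first one to its successor in its row and to the cell above it. -/
inductive CellPair (s s' : ℤˣ) : Label → ZMod 3 → Label → Prop
  | mk (x x' : ZMod 3) (isFirst isLast isFirst' isLast' : Bool) :
    CellPair s s' (.cell x s isFirst isLast) (x + (s : ℤ)) (.cell x' s' isFirst' isLast')

/-- The tiles `Q` of any two points matching the pattern `D` obey the constraint `H`. -/
def Compatible {A ι : Type*} (P : Label → A → Prop) (R : ZMod 3 → A → A → Prop)
    (Q : ι → A → Prop) (D : Label → ZMod 3 → Label → Prop) (H : ι → ι → Bool) : Prop :=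
  ∀ l c l', D l c l' → ∀ a b, P l a → R c a b → P l' b → ∀ i j, Q i a → Q j b → H i j = true

/-- Every point carries a tile (`Q i a` means that `a` carries the tile `i`), and adjacent cells
carry matching tiles. -/
structure TileAxioms {A : Type*} (T : TileSys) (P : Label → A → Prop) (R : ZMod 3 → A → A → Prop)
    (Q : Fin T.n → A → Prop) : Prop where
  exists_tile : ∀ a, ∃ i, Q i a
  east : Compatible P R Q (CellPair 1 1) T.H
  west : Compatible P R Q (CellPair (-1) (-1)) fun i j ↦ T.H j i
  north : ∀ s, Compatible P R Q (CellPair s (-s)) T.V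

lemma cellPair_cellLabel (k m k' m' : ℕ) : CellPair (rowSign k) (rowSign k') (cellLabel k m)
    (rowPos k (2 * m + 1) : ℤ) (cellLabel k' m') := by
  rw [rowPos_succ, Int.cast_add]
  constructor

theorem exists_forall_of_eventually {ι α : Type*} [Finite α] (f : ℕ → ι → α) :
    ∃ g : ι → α, ∀ (r : α → α → Prop) (i j : ι),
      (∀ᶠ N in Filter.atTop, r (f N i) (f N j)) → r (g i) (g j) := by
  have limit (i : ι) : ∃ c, ∀ᶠ N in (Filter.hyperfilter ℕ : Filter ℕ), f N i = c :=
    Ultrafilter.eventually_exists_iff.1 (.of_forall fun N ↦ ⟨f N i, rfl⟩)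
  choose g hg using limit
  refine ⟨g, fun r i j h ↦ ?_⟩
  obtain ⟨N, hr, hi, hj⟩ :=
    ((h.filter_mono Nat.hyperfilter_le_atTop).and ((hg i).and (hg j))).exists
  exact hi ▸ hj ▸ hr

/-- The index, in row `k`, of the cell of column `p`. -/
def columnIndex (k p : ℕ) : ℕ := if k % 2 = 0 then k / 2 + p else k / 2 - p

theorem TileSys.tilesNat_of_axioms {A : Type*} (T : TileSys) {P : Label → A → Prop}
    {R : ZMod 3 → A → A → Prop} {Q : Fin T.n → A → Prop} [∀ c, IsTrans A (R c)]
    (hP : SnakeAxioms P R) (hQ : TileAxioms T P R Q) : T.TilesNat := by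
  obtain ⟨e, hlabel, hrow, hcol⟩ := hP.exists_grid
  choose t ht using hQ.exists_tile
  have north (k m m' : ℕ) (h : m + m' = k) : T.V (t (e k m)) (t (e (k + 1) m')) = true :=
    hQ.north _ _ _ _ (rowSign_succ k ▸ cellPair_cellLabel k m (k + 1) m') _ _
      (hlabel _ _ (by lia)) (hcol _ _ _ h) (hlabel _ _ (by lia)) _ _ (ht _) (ht _)
  have east (k p : ℕ) (hp : p < k / 2) :
      T.H (t (e k (columnIndex k p))) (t (e k (columnIndex k (p + 1)))) = true := by
    have pair (m : ℕ) := cellPair_cellLabel k m k (m + 1)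
    rcases rowSign_eq_one_or k with ⟨hk, hs⟩ | ⟨hk, hs⟩ <;> rw [hs] at pair <;>
      simp only [columnIndex, hk]
    · exact hQ.east _ _ _ (pair _) _ _ (hlabel _ _ (by lia)) (hrow _ _ (by lia))
        (hlabel _ _ (by lia)) _ _ (ht _) (ht _)
    · rw [if_neg one_ne_zero, if_neg one_ne_zero, show k / 2 - p = k / 2 - (p + 1) + 1 by lia]
      exact hQ.west _ _ _ (pair _) _ _ (hlabel _ _ (by lia)) (hrow _ _ (by lia))
        (hlabel _ _ (by lia)) _ _ (ht _) (ht _)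
  obtain ⟨ρ, hρ⟩ := exists_forall_of_eventually fun N (z : ℕ × ℕ) ↦
    t (e (2 * N + z.2) (columnIndex (2 * N + z.2) z.1))
  refine ⟨ρ, fun p q ↦ ⟨hρ (T.H · · = true) _ _ ?_, hρ (T.V · · = true) _ _ ?_⟩⟩ <;>
    filter_upwards [Filter.eventually_gt_atTop p] with N hN
  · exact east _ _ (by lia)
  · refine north _ _ _ ?_
    simp only [columnIndex]
    split_ifs <;> lia

/-! ### From a tiling to the intended model -/

/-- The labels of the intended model, whose points are the pairs `(k, i)` standing for the `i`-th
point of row `k`. -/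
inductive Carries : Label → ℕ × ℕ → Prop
  | cell {k m : ℕ} (h : m ≤ k) : Carries (cellLabel k m) (k, 2 * m)
  | link {k m : ℕ} (h : m < k) :
    Carries (.link (rowPos k (2 * m + 1) : ℤ) (rowSign k) (m + 1 = k)) (k, 2 * m + 1)
  | turn (k : ℕ) : Carries (.turn (rowPos k (2 * k + 1) : ℤ) (rowSign k)) (k, 2 * k + 1)

/-- A set of points at distance at most `1` from position `z` within two consecutive rows. The
bricks whose `z` has a given residue modulo 3 partition the points. -/
def brick (z t : ℤ) : Set (ℕ × ℕ) :=
  {p | rowPos p.1 p.2 ∈ Set.Icc (z - 1) (z + 1) ∧ z + p.1 ∈ Set.Icc (2 * t - 1) (2 * t)}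

/-- The relation with index `c` of the intended model: the points of each brick with `z` congruent
to `c` are related in the order in which the snake meets them. -/
def SnakeRel (c : ZMod 3) (p q : ℕ × ℕ) : Prop :=
  toLex p < toLex q ∧ ∃ z t : ℤ, (z : ZMod 3) = c ∧ p ∈ brick z t ∧ q ∈ brick z t

lemma brick_unique {z t z' t' : ℤ} {p : ℕ × ℕ} (hz : (z : ZMod 3) = z') (h : p ∈ brick z t)
    (h' : p ∈ brick z' t') : z = z' ∧ t = t' := by
  have hmod : z % 3 = z' % 3 := (ZMod.intCast_eq_intCast_iff z z' 3).1 hz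
  obtain ⟨⟨_, _⟩, _, _⟩ := h
  obtain ⟨⟨_, _⟩, _, _⟩ := h'
  omega

instance (c : ZMod 3) : IsTrans (ℕ × ℕ) (SnakeRel c) where
  trans := by
    rintro p q r ⟨hpq, z, t, rfl, hp, hq⟩ ⟨hqr, z', t', hz, hq', hr⟩
    obtain ⟨rfl, rfl⟩ := brick_unique hz hq' hq
    exact ⟨hpq.trans hqr, z', t', rfl, hp, hr⟩

lemma rowPos_emod_two (k i : ℕ) : rowPos k i % 2 = (i + k : ℤ) % 2 := by
  rcases rowSign_eq_one_or k with ⟨hk, hs⟩ | ⟨hk, hs⟩ <;> simp only [rowPos, hs, Units.val_neg,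
    Units.val_one] <;> omega

lemma SnakeRel.of_mem_Icc {z : ℤ} {k i j : ℕ} (hij : i < j)
    (hi : rowPos k i ∈ Set.Icc (z - 1) (z + 1)) (hj : rowPos k j ∈ Set.Icc (z - 1) (z + 1)) :
    SnakeRel z (k, i) (k, j) := by
  have hk : z + k ∈ Set.Icc (2 * ((z + k + 1) / 2) - 1) (2 * ((z + k + 1) / 2)) := by
    constructor <;> omega
  exact ⟨Prod.Lex.toLex_lt_toLex.2 (.inr ⟨rfl, hij⟩), z, _, rfl, ⟨hi, hk⟩, hj, hk⟩

lemma SnakeRel.of_mem_Icc_succ_row {z : ℤ} {k i j : ℕ} (hz : (z + k) % 2 = 1)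
    (hi : rowPos k i ∈ Set.Icc (z - 1) (z + 1))
    (hj : rowPos (k + 1) j ∈ Set.Icc (z - 1) (z + 1)) : SnakeRel z (k, i) (k + 1, j) := by
  refine ⟨Prod.Lex.toLex_lt_toLex.2 (.inl k.lt_succ_self), z, (z + k + 1) / 2, rfl,
    ⟨hi, ?_⟩, hj, ?_⟩ <;> constructor <;> push_cast <;> omega

lemma snakeRel_succ (k i : ℕ) : SnakeRel (rowPos k i : ℤ) (k, i) (k, i + 1) ∧
    SnakeRel (rowPos k (i + 1) : ℤ) (k, i) (k, i + 1) := by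
  have hsucc := rowPos_succ k i
  have hs := Int.units_eq_one_or (rowSign k)
  constructor <;> refine .of_mem_Icc i.lt_succ_self ?_ ?_ <;>
    rcases hs with hs | hs <;> rw [hs] at hsucc <;> push_cast at hsucc <;> constructor <;> omega

lemma snakeRel_turn (k : ℕ) :
    SnakeRel (rowPos k (2 * k + 1) : ℤ) (k, 2 * k + 1) (k + 1, 0) := by
  have hmod := rowPos_emod_two k (2 * k + 1)
  have hup := rowPos_succ_row (show 2 * k + 1 + 0 = 2 * k + 1 by rfl)
  exact .of_mem_Icc_succ_row (by omega) (by constructor <;> omega) (by constructor <;> omega)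

/-- The parity of `rowPos k (2 * m + 1)` is such that its bricks reach from row `k` up, not
down. -/
lemma SnakeRel.row_eq_or {k m k' j : ℕ}
    (h : SnakeRel (rowPos k (2 * m + 1) : ℤ) (k, 2 * m) (k', j)) :
    rowPos k' j ∈ Set.Icc (rowPos k (2 * m + 1) - 1) (rowPos k (2 * m + 1) + 1) ∧
      (k' = k ∧ 2 * m < j ∨ k' = k + 1) := by
  obtain ⟨hlt, z, t, hz, ⟨⟨_, _⟩, _, _⟩, ⟨_, _⟩, _, _⟩ := h
  rw [Prod.Lex.toLex_lt_toLex] at hlt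
  have hmod : z % 3 = rowPos k (2 * m + 1) % 3 := (ZMod.intCast_eq_intCast_iff _ _ 3).1 hz
  have hparity := rowPos_emod_two k (2 * m)
  have hsucc := rowPos_succ k (2 * m)
  simp only at *
  rcases Int.units_eq_one_or (rowSign k) with hs | hs <;> rw [hs] at hsucc <;>
    simp only [Set.mem_Icc] <;> push_cast at * <;> omega

lemma Carries.of_cell {x : ZMod 3} {s : ℤˣ} {isFirst isLast : Bool} {a : ℕ × ℕ}
    (h : Carries (.cell x s isFirst isLast) a) : ∃ k m, m ≤ k ∧ a = (k, 2 * m) ∧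
      x = (rowPos k (2 * m) : ℤ) ∧ s = rowSign k ∧ isFirst = decide (m = 0) := by
  cases h with | cell h => exact ⟨_, _, h, rfl, rfl, rfl, rfl⟩

lemma Carries.of_link {x : ZMod 3} {s : ℤˣ} {toLast : Bool} {a : ℕ × ℕ}
    (h : Carries (.link x s toLast) a) : ∃ k m, m < k ∧ a = (k, 2 * m + 1) ∧
      x = (rowPos k (2 * m + 1) : ℤ) ∧ s = rowSign k ∧ toLast = decide (m + 1 = k) := by
  cases h with | link h => exact ⟨_, _, h, rfl, rfl, rfl, rfl⟩

lemma rowSign_ne_neg (k : ℕ) : rowSign k ≠ -rowSign k := by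
  rcases Int.units_eq_one_or (rowSign k) with hs | hs <;> rw [hs] <;> decide

lemma Carries.exists_next {l : Label} {a : ℕ × ℕ} (h : Carries l a) : ∃ b guess,
    Carries (l.next guess) b ∧ SnakeRel l.pos a b ∧ SnakeRel (l.next guess).pos a b := by
  have of_next_eq {l l' : Label} {a b : ℕ × ℕ} (guess : Bool) (hl : l.next guess = l')
      (hb : Carries l' b) (hab : SnakeRel l.pos a b ∧ SnakeRel l'.pos a b) : ∃ b guess,
      Carries (l.next guess) b ∧ SnakeRel l.pos a b ∧ SnakeRel (l.next guess).pos a b := by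
    subst hl; exact ⟨b, guess, hb, hab⟩
  rcases h with @⟨k, m, hm⟩ | @⟨k, m, hm⟩ | k
  · rcases hm.lt_or_eq with hm | rfl
    · refine of_next_eq (m + 1 = k) ?_ (.link hm) (snakeRel_succ k _)
      simp [cellLabel, hm.ne, Label.next, rowPos_succ]
    · refine of_next_eq true ?_ (.turn m) (snakeRel_succ m _)
      simp [cellLabel, Label.next, rowPos_succ]
  · refine of_next_eq true ?_ (.cell hm) (snakeRel_succ k _)
    simp [cellLabel, Label.next, mul_add, rowPos_succ]
  · have hpos := rowPos_succ_row (add_zero (2 * k + 1))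
    refine of_next_eq true ?_ (.cell (k + 1).zero_le) ⟨snakeRel_turn k, ?_⟩
    · simp [cellLabel, Label.next, rowSign_succ, hpos]
    · simpa [cellLabel, Label.pos, hpos] using snakeRel_turn k

lemma rowPos_inj {k i j : ℕ} (h : rowPos k i = rowPos k j) : i = j := by
  simp only [rowPos] at h
  have := mul_left_cancel₀ (Units.ne_zero _) h
  lia

lemma snakeAxioms_carries : SnakeAxioms Carries SnakeRel where
  exists_start := ⟨_, by simpa [cellLabel, rowPos, rowSign] using Carries.cell (le_refl 0)⟩
  exists_next _ _ h := h.exists_next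
  link_above := by
    intro x s isFirst isLast toLast a b ha hab hb
    obtain ⟨k, m, hm, rfl, rfl, rfl, rfl⟩ := ha.of_cell
    obtain ⟨k', m', hm', rfl, hx, hs, rfl⟩ := hb.of_link
    rw [← Int.cast_add, ← rowPos_succ] at hab
    obtain ⟨hpos, ⟨rfl, _⟩ | rfl⟩ := hab.row_eq_or
    · exact absurd hs.symm (rowSign_ne_neg k')
    have hmod : rowPos k (2 * m) % 3 = rowPos (k + 1) (2 * m' + 1) % 3 :=
      (ZMod.intCast_eq_intCast_iff _ _ 3).1 hx
    rw [rowPos_succ_row (show 2 * (k - m') + (2 * m' + 1) = 2 * k + 1 by lia)] at hpos hmod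
    have hs := Int.units_eq_one_or (rowSign k)
    have hsucc := rowPos_succ k (2 * m)
    have hpos_eq : rowPos k (2 * m) = rowPos k (2 * (k - m')) := by
      obtain ⟨_, _⟩ := hpos
      rcases hs with hs | hs <;> rw [hs] at hsucc <;> push_cast at hsucc <;> omega
    have hmm' : 2 * m + (2 * m' + 1) = 2 * k + 1 := by have := rowPos_inj hpos_eq; lia
    refine ⟨decide_eq_decide.2 (by lia), ?_⟩
    have hparity := rowPos_emod_two k (2 * m)
    rw [← Int.cast_sub]
    refine .of_mem_Icc_succ_row ?_ ?_ (rowPos_succ_row hmm' ▸ ?_) <;>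
      rcases hs with hs | hs <;> simp only [hs, Set.mem_Icc] <;> push_cast at * <;> omega

lemma Carries.succ_of_cell {x x' : ZMod 3} {s : ℤˣ} {isFirst isLast isFirst' isLast' : Bool}
    {a b : ℕ × ℕ} (ha : Carries (.cell x s isFirst isLast) a) (hab : SnakeRel (x + (s : ℤ)) a b)
    (hb : Carries (.cell x' s isFirst' isLast') b) :
    b.1 = a.1 ∧ rowPos b.1 b.2 = rowPos a.1 a.2 + 2 * s := by
  obtain ⟨k, m, hm, rfl, rfl, rfl, rfl⟩ := ha.of_cell
  obtain ⟨k', m', hm', rfl, rfl, hs, rfl⟩ := hb.of_cell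
  rw [← Int.cast_add, ← rowPos_succ] at hab
  obtain ⟨⟨h₁, h₂⟩, ⟨rfl, hlt⟩ | rfl⟩ := hab.row_eq_or
  · refine ⟨rfl, ?_⟩
    rcases Int.units_eq_one_or (rowSign k') with hs | hs <;>
      simp only [rowPos, hs] at * <;> push_cast at * <;> omega
  · exact absurd (hs.trans (rowSign_succ k)) (rowSign_ne_neg k)

lemma Carries.above_of_cell {x x' : ZMod 3} {s : ℤˣ} {isFirst isLast isFirst' isLast' : Bool}
    {a b : ℕ × ℕ} (ha : Carries (.cell x s isFirst isLast) a) (hab : SnakeRel (x + (s : ℤ)) a b)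
    (hb : Carries (.cell x' (-s) isFirst' isLast') b) :
    b.1 = a.1 + 1 ∧ rowPos b.1 b.2 / 2 = rowPos a.1 a.2 / 2 := by
  obtain ⟨k, m, hm, rfl, rfl, rfl, rfl⟩ := ha.of_cell
  obtain ⟨k', m', hm', rfl, rfl, hs, rfl⟩ := hb.of_cell
  rw [← Int.cast_add, ← rowPos_succ] at hab
  obtain ⟨⟨h₁, h₂⟩, ⟨rfl, _⟩ | rfl⟩ := hab.row_eq_or
  · exact absurd hs.symm (rowSign_ne_neg k')
  · have hparity := rowPos_emod_two k (2 * m)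
    have hparity' := rowPos_emod_two (k + 1) (2 * m')
    rw [rowPos_succ] at h₁ h₂
    rcases rowSign_eq_one_or k with ⟨hk, hs⟩ | ⟨hk, hs⟩ <;>
      rw [hs] at h₁ h₂ <;> push_cast at * <;> exact ⟨rfl, by omega⟩

/-- A tiling of `ℕ × ℕ` yields one of the upper half-plane, which contains the whole snake. -/
lemma TileSys.TilesNat.exists_tiling_int {T : TileSys} (h : T.TilesNat) : ∃ ρ : ℤ × ℕ → Fin T.n,
    ∀ x q, T.H (ρ (x, q)) (ρ (x + 1, q)) = true ∧ T.V (ρ (x, q)) (ρ (x, q + 1)) = true := by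
  obtain ⟨ρ, hρ⟩ := h
  obtain ⟨ρ', hρ'⟩ := exists_forall_of_eventually
    fun N (z : ℤ × ℕ) ↦ ρ ((z.1 + N).toNat, z.2)
  refine ⟨ρ', fun x q ↦ ⟨hρ' (T.H · · = true) _ _ ?_, hρ' (T.V · · = true) _ _ ?_⟩⟩ <;>
    filter_upwards [Filter.eventually_ge_atTop x.natAbs] with N hN
  · rw [show (x + 1 + N).toNat = (x + N).toNat + 1 by omega]
    exact (hρ _ _).1
  · exact (hρ _ _).2

lemma tileAxioms_carries {T : TileSys} {ρ : ℤ × ℕ → Fin T.n}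
    (hρ : ∀ x q, T.H (ρ (x, q)) (ρ (x + 1, q)) = true ∧ T.V (ρ (x, q)) (ρ (x, q + 1)) = true) :
    TileAxioms T Carries SnakeRel fun i p ↦ ρ (rowPos p.1 p.2 / 2, p.1) = i where
  exists_tile _ := ⟨_, rfl⟩
  east := by
    rintro _ _ _ ⟨⟩ a b ha hab hb _ _ rfl rfl
    obtain ⟨hrow, hpos⟩ := ha.succ_of_cell hab hb
    rw [hpos, hrow, Units.val_one, Int.add_mul_ediv_left _ _ two_ne_zero]
    exact (hρ _ _).1
  west := by
    rintro _ _ _ ⟨⟩ a b ha hab hb _ _ rfl rfl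
    obtain ⟨hrow, hpos⟩ := ha.succ_of_cell hab hb
    rw [Units.val_neg, Units.val_one, ← sub_eq_iff_eq_add, mul_neg_one, sub_neg_eq_add,
      ← mul_one 2] at hpos
    rw [← hpos, hrow, Int.add_mul_ediv_left _ _ two_ne_zero]
    exact (hρ _ _).1
  north := by
    rintro s _ _ _ ⟨⟩ a b ha hab hb _ _ rfl rfl
    obtain ⟨hrow, hpos⟩ := ha.above_of_cell hab hb
    rw [hpos, hrow]
    exact (hρ _ _).2

/-! ### The sentence -/

noncomputable instance : Encodable Label := Fintype.toEncodable Label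

namespace F

/-- The conjunction of a list of formulas. -/
def conj {m : ℕ} (hm : m ≤ 2) (l : List (F m)) : F m := l.foldr .and (.not (.fls hm))

/-- The disjunction of a list of formulas. -/
def disj {m : ℕ} (hm : m ≤ 2) (l : List (F m)) : F m := l.foldr .or (.fls hm)

/-- The conjunction of a finite family of sentences. -/
noncomputable def conjAll {ι : Type} [Finite ι] (f : ι → F 0) : F 0 :=
  conj (Nat.zero_le 2) ((Set.finite_univ (α := ι)).toFinset.toList.map f)

/-- The atom saying that the last variable has a given label or a given tile. -/
noncomputable def mark (u : Label ⊕ ℕ) {m : ℕ} (h₁ : 1 ≤ m := by omega) (h₂ : m ≤ 2 := by omega) :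
    F m :=
  .patom (Encodable.encode u) h₁ h₂

/-- The sentence `∀ x (φ → ∀ y (T_c x y → ψ))`. -/
def guardedAll (φ : F 1) (c : ZMod 3) (ψ : F 2) : F 0 :=
  .all (Nat.zero_le 1) (.imp φ (.all le_rfl (.imp (.batom c) ψ)))

/-- Expresses `SnakeAxioms`, with `start`, `next` and `above` for its three fields; `step` says that
the second variable follows a first one labelled `l`. -/
noncomputable def snake : F 0 :=
  conj (Nat.zero_le 2) [start, conjAll next, conjAll fun x ↦ conjAll fun s ↦
    conjAll fun isFirst ↦ conjAll fun isLast ↦ conjAll fun toLast ↦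
      above x s isFirst isLast toLast]
where
  start : F 0 := .ex (Nat.zero_le 1) (mark (.inl (.cell 0 1 true true)))
  step (l : Label) (guess : Bool) : F 2 :=
    .and (mark (.inl (l.next guess))) (.and (.batom l.pos) (.batom (l.next guess).pos))
  next (l : Label) : F 0 := .all (Nat.zero_le 1) (.imp (mark (.inl l))
    (.ex le_rfl (.or (step l false) (step l true))))
  above (x : ZMod 3) (s : ℤˣ) (isFirst isLast toLast : Bool) : F 0 :=
    guardedAll (mark (.inl (.cell x s isFirst isLast))) (x + (s : ℤ))
      (.imp (mark (.inl (.link x (-s) toLast)))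
        (if isFirst = toLast then .batom (x - (s : ℤ) : ZMod 3) else .fls le_rfl))

/-- Expresses `Compatible` for a constraint on tiles given by the list of forbidden pairs; `pair`
excludes one such pair in one of the finitely many situations of the pattern `D`. -/
noncomputable def compatible (D : Label → ZMod 3 → Label → Prop) (L : List (ℕ × ℕ)) : F 0 :=
  conjAll fun d : {d : Label × ZMod 3 × Label // D d.1 d.2.1 d.2.2} ↦
    conj (Nat.zero_le 2) (L.map (pair d.1))
where
  pair (d : Label × ZMod 3 × Label) (p : ℕ × ℕ) : F 0 :=
    guardedAll (.and (mark (.inl d.1)) (mark (.inr p.1))) d.2.1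
      (.imp (mark (.inl d.2.2)) (.not (mark (.inr p.2))))

/-- The sentence for the tiling system with `n` tiles given by the lists `h` and `v` of the pairs of
tiles forbidden horizontally and vertically. Beside the snake it expresses `TileAxioms`. -/
noncomputable def tiling (n : ℕ) (h v : List (ℕ × ℕ)) : F 0 :=
  conj (Nat.zero_le 2) [snake, existsTile n, compatible (CellPair 1 1) h,
    compatible (CellPair (-1) (-1)) (h.map Prod.swap),
    conjAll fun s ↦ compatible (CellPair s (-s)) v]
where
  existsTile (n : ℕ) : F 0 :=
    .all (Nat.zero_le 1) (disj one_le_two ((List.range n).map fun i ↦ mark (.inr i)))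

end F

/-- The interpretation of the labels in a structure. -/
def Str.label {A : Type} (M : Str A) (l : Label) (a : A) : Prop :=
  M.U (Encodable.encode (.inl l : Label ⊕ ℕ)) a

/-- The interpretation of the tiles in a structure. -/
def Str.tile {A : Type} (M : Str A) (i : ℕ) (a : A) : Prop :=
  M.U (Encodable.encode (.inr i : Label ⊕ ℕ)) a

section Semantics

variable {A : Type} {M : Str A}

lemma sat_conj {m : ℕ} {hm : m ≤ 2} {l : List (F m)} {v : Fin m → A} :
    Sat M (F.conj hm l) v ↔ ∀ φ ∈ l, Sat M φ v := by
  induction l with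
  | nil => simp [F.conj, Sat]
  | cons φ l ih => simpa [F.conj, Sat] using fun _ ↦ ih

lemma sat_disj {m : ℕ} {hm : m ≤ 2} {l : List (F m)} {v : Fin m → A} :
    Sat M (F.disj hm l) v ↔ ∃ φ ∈ l, Sat M φ v := by
  induction l with
  | nil => simp [F.disj, Sat]
  | cons φ l ih => simpa [F.disj, Sat] using or_congr_right ih

lemma sat_conjAll {ι : Type} [Finite ι] {f : ι → F 0} {v : Fin 0 → A} :
    Sat M (F.conjAll f) v ↔ ∀ i, Sat M (f i) v := by
  simp [F.conjAll, sat_conj]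

lemma snoc_eq_singleton (v : Fin 0 → A) (a : A) : (Fin.snoc v a : Fin 1 → A) = ![a] := by
  funext i; fin_cases i; rfl

lemma snoc_singleton (a b : A) : (Fin.snoc ![a] b : Fin 2 → A) = ![a, b] := by
  simp

lemma sat_guardedAll {φ : F 1} {c : ZMod 3} {ψ : F 2} {v : Fin 0 → A} :
    Sat M (F.guardedAll φ c ψ) v ↔
      ∀ a, Sat M φ ![a] → ∀ b, M.T c a b → Sat M ψ ![a, b] := by
  simp only [F.guardedAll, Sat, snoc_eq_singleton, snoc_singleton]
  rfl

lemma sat_start {v : Fin 0 → A} :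
    Sat M F.snake.start v ↔ ∃ a, M.label (.cell 0 1 true true) a :=
  Iff.rfl

lemma sat_next {l : Label} {v : Fin 0 → A} : Sat M (F.snake.next l) v ↔
    ∀ a, M.label l a → ∃ b guess,
      M.label (l.next guess) b ∧ M.T l.pos a b ∧ M.T (l.next guess).pos a b := by
  simp only [F.snake.next, F.snake.step, Sat, snoc_eq_singleton, snoc_singleton, Bool.exists_bool]
  rfl

lemma sat_above {x : ZMod 3} {s : ℤˣ} {isFirst isLast toLast : Bool} {v : Fin 0 → A} :
    Sat M (F.snake.above x s isFirst isLast toLast) v ↔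
      ∀ a, M.label (.cell x s isFirst isLast) a → ∀ b, M.T (x + (s : ℤ) : ZMod 3) a b →
        M.label (.link x (-s) toLast) b → isFirst = toLast ∧ M.T (x - (s : ℤ) : ZMod 3) a b := by
  rw [F.snake.above, sat_guardedAll]
  split_ifs with h
  · simp only [h, true_and]; rfl
  · simp only [h, false_and]; rfl

lemma sat_snake {v : Fin 0 → A} : Sat M F.snake v ↔ SnakeAxioms M.label M.T := by
  simp only [F.snake, sat_conj, List.forall_mem_cons, sat_conjAll, sat_start, sat_next, sat_above]
  constructor
  · rintro ⟨start, next, above, -⟩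
    exact ⟨start, next, fun x s isFirst isLast toLast a b ha hab hb ↦
      above x s isFirst isLast toLast a ha b hab hb⟩
  · rintro ⟨start, next, above⟩
    exact ⟨start, next, fun x s isFirst isLast toLast a ha b hab hb ↦
      above x s isFirst isLast toLast a b ha hab hb, List.forall_mem_nil _⟩

/-- The list `L` consists of the pairs violating the constraint `H`. -/
def ListsForbidden {n : ℕ} (L : List (ℕ × ℕ)) (H : Fin n → Fin n → Bool) : Prop :=
  ∀ i j : ℕ, (i, j) ∈ L ↔ ∃ i' j' : Fin n, H i' j' = false ∧ i' = i ∧ j' = j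

lemma ListsForbidden.map_swap {n : ℕ} {L : List (ℕ × ℕ)} {H : Fin n → Fin n → Bool}
    (h : ListsForbidden L H) : ListsForbidden (L.map Prod.swap) fun i j ↦ H j i := by
  intro i j
  rw [← Prod.swap_swap (i, j), List.mem_map_of_injective Prod.swap_injective]
  exact (h j i).trans ⟨fun ⟨j', i', hH, hj, hi⟩ ↦ ⟨i', j', hH, hi, hj⟩,
    fun ⟨i', j', hH, hi, hj⟩ ↦ ⟨j', i', hH, hj, hi⟩⟩

lemma sat_compatible {D : Label → ZMod 3 → Label → Prop} {n : ℕ} {H : Fin n → Fin n → Bool}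
    {L : List (ℕ × ℕ)} (hL : ListsForbidden L H) {v : Fin 0 → A} :
    Sat M (F.compatible D L) v ↔ Compatible M.label M.T (fun i : Fin n ↦ M.tile i) D H := by
  have sat_pair (d : Label × ZMod 3 × Label) (p : ℕ × ℕ) : Sat M (F.compatible.pair d p) v ↔
      ∀ a, M.label d.1 a ∧ M.tile p.1 a → ∀ b, M.T d.2.1 a b → M.label d.2.2 b →
        ¬ M.tile p.2 b := sat_guardedAll
  simp only [F.compatible, sat_conjAll, sat_conj, List.forall_mem_map, sat_pair]
  constructor
  · intro h l c l' hD a b ha hab hb i j hi hj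
    by_contra hH
    exact h ⟨(l, c, l'), hD⟩ (i, j) ((hL _ _).2 ⟨i, j, by simpa using hH, rfl, rfl⟩) a ⟨ha, hi⟩ b
      hab hb hj
  · rintro h ⟨⟨l, c, l'⟩, hD⟩ ⟨_, _⟩ hp a ⟨ha, hi⟩ b hab hb hj
    obtain ⟨i, j, hH, rfl, rfl⟩ := (hL _ _).1 hp
    simp [h l c l' hD a b ha hab hb i j hi hj] at hH

lemma sat_tiling {T : TileSys} {h w : List (ℕ × ℕ)} (hh : ListsForbidden h T.H)
    (hw : ListsForbidden w T.V) {v : Fin 0 → A} : Sat M (F.tiling T.n h w) v ↔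
      SnakeAxioms M.label M.T ∧ TileAxioms T M.label M.T fun i ↦ M.tile i := by
  have sat_exists_tile : Sat M (F.tiling.existsTile T.n) v ↔
      ∀ a, ∃ i : Fin T.n, M.tile i a := by
    simp only [F.tiling.existsTile, Sat, sat_disj, List.mem_map, List.mem_range,
      exists_exists_and_eq_and, Fin.exists_iff, exists_prop]
    rfl
  simp only [F.tiling, sat_conj, List.forall_mem_cons, sat_snake, sat_exists_tile, sat_conjAll,
    sat_compatible hh, sat_compatible hh.map_swap, sat_compatible hw]
  constructor
  · rintro ⟨snake, tile, east, west, north, -⟩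
    exact ⟨snake, tile, east, west, north⟩
  · rintro ⟨snake, tile, east, west, north⟩
    exact ⟨snake, tile, east, west, north, List.forall_mem_nil _⟩

end Semantics

lemma exists_str_eq {A : Type} (P : Label → A → Prop) (R : ZMod 3 → A → A → Prop)
    (Q : ℕ → A → Prop) : ∃ M : Str A, M.label = P ∧ M.T = R ∧ M.tile = Q := by
  refine ⟨⟨fun p a ↦ ∃ u : Label ⊕ ℕ, Encodable.encode u = p ∧ Sum.elim (P · a) (Q · a) u, R⟩, ?_,
    rfl, ?_⟩ <;>
  · funext i a
    simp only [Str.label, Str.tile, Encodable.encode_injective.eq_iff, exists_eq_left, Sum.elim_inl,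
      Sum.elim_inr]

theorem satisfiable_tiling_iff {T : TileSys} {h v : List (ℕ × ℕ)} (hh : ListsForbidden h T.H)
    (hv : ListsForbidden v T.V) : Satisfiable (F.tiling T.n h v) ↔ T.TilesNat := by
  constructor
  · rintro ⟨A, _, M, hT, hM⟩
    have (c : ZMod 3) : IsTrans A (M.T c) := ⟨fun _ _ _ hab hbc ↦ hT c hab hbc⟩
    obtain ⟨hP, hQ⟩ := (sat_tiling hh hv).1 hM
    exact T.tilesNat_of_axioms hP hQ
  · intro hT
    obtain ⟨ρ, hρ⟩ := hT.exists_tiling_int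
    obtain ⟨M, hlabel, hrel, htile⟩ := exists_str_eq Carries SnakeRel
      fun i p ↦ (ρ (rowPos p.1 p.2 / 2, p.1) : ℕ) = i
    refine ⟨ℕ × ℕ, inferInstance, M, fun c : ZMod 3 ↦ ?_, (sat_tiling hh hv).2 ?_⟩
    · rw [hrel]
      exact fun _ _ _ ↦ IsTrans.trans (r := SnakeRel c) _ _ _
    · rw [hlabel, hrel, htile]
      simpa only [Fin.val_inj] using ⟨snakeAxioms_carries, tileAxioms_carries hρ⟩

/-! ### Computability -/

lemma testBit_sum_two_pow (S : Finset ℕ) (a : ℕ) : (∑ b ∈ S, 2 ^ b).testBit a = true ↔ a ∈ S := by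
  rw [← Nat.mem_bitIndices, ← List.mem_toFinset, Finset.toFinset_bitIndices_sum_two_pow]

/-- The pairs `(i, j)` of tiles, with `i, j < n`, at which the constraint coded by `b` is
violated. -/
def forbiddenPairs (n b : ℕ) : List (ℕ × ℕ) :=
  (List.range n ×ˢ List.range n).filter fun p ↦ ¬ b.testBit (p.1 * n + p.2)

lemma testBit_encode_constraint {n : ℕ} (H : Fin n → Fin n → Bool) (i j : Fin n) :
    (∑ i : Fin n, ∑ j : Fin n, if H i j then 2 ^ (i.val * n + j.val) else 0).testBit (i * n + j) =
      H i j := by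
  have position_injective : Function.Injective fun p : Fin n × Fin n ↦ (p.1 : ℕ) * n + p.2 := by
    intro p q hpq
    refine finProdFinEquiv.injective (Fin.ext ?_)
    simpa only [finProdFinEquiv_apply_val, add_comm, mul_comm] using hpq
  have sum_eq : (∑ i : Fin n, ∑ j : Fin n, if H i j then 2 ^ (i.val * n + j.val) else 0) =
      ∑ b ∈ ({p : Fin n × Fin n | H p.1 p.2} : Finset _).image fun p ↦ (p.1 : ℕ) * n + p.2,
        2 ^ b := by
    rw [Finset.sum_image position_injective.injOn, Finset.sum_filter, Fintype.sum_prod_type]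
  rw [sum_eq, Bool.eq_iff_iff, testBit_sum_two_pow,
    position_injective.mem_finset_image (a := (i, j)), Finset.mem_filter_univ]

lemma listsForbidden_forbiddenPairs {n : ℕ} (H : Fin n → Fin n → Bool) :
    ListsForbidden (forbiddenPairs n
      (∑ i : Fin n, ∑ j : Fin n, if H i j then 2 ^ (i.val * n + j.val) else 0)) H := by
  intro i j
  simp only [forbiddenPairs, List.mem_filter, List.mem_product, List.mem_range]
  constructor
  · rintro ⟨⟨hi, hj⟩, h⟩
    exact ⟨⟨i, hi⟩, ⟨j, hj⟩, by
      simpa [← testBit_encode_constraint H ⟨i, hi⟩ ⟨j, hj⟩] using h, rfl, rfl⟩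
  · rintro ⟨i, j, hH, rfl, rfl⟩
    simp [testBit_encode_constraint, hH]

section Primrec

variable {α β γ : Type} [Primcodable α] [Primcodable β] [Primcodable γ]

lemma primrec_list_product {l : α → List β} {l' : α → List γ} (hl : Primrec l)
    (hl' : Primrec l') : Primrec fun a ↦ l a ×ˢ l' a :=
  .list_flatMap hl (.list_map (hl'.comp .fst) (Primrec.pair (Primrec.snd.comp .fst) .snd))

lemma primrec_testBit : Primrec₂ Nat.testBit := by
  have primrec_pow : Primrec₂ ((· ^ ·) : ℕ → ℕ → ℕ) := Primrec₂.unpaired'.1 Nat.Primrec.pow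
  refine (PrimrecPred.decide (Primrec.eq.comp (Primrec.nat_mod.comp (Primrec.nat_div.comp .fst
    (primrec_pow.comp (.const 2) .snd)) (.const 2)) (.const 1))).of_eq fun p ↦ ?_
  exact Nat.testBit_eq_decide_div_mod_eq.symm

lemma primrec_forbiddenPairs : Primrec₂ forbiddenPairs := by
  have range_fst : Primrec fun q : ℕ × ℕ ↦ List.range q.1 := Primrec.list_range.comp .fst
  have violated : PrimrecRel fun (p q : ℕ × ℕ) ↦ ¬ q.2.testBit (p.1 * q.1 + p.2) := by
    refine PrimrecPred.not (Primrec.eq.comp (primrec_testBit.comp ?_ ?_) (.const true))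
    · exact Primrec.snd.comp .snd
    · exact Primrec.nat_add.comp (Primrec.nat_mul.comp (Primrec.fst.comp .fst)
        (Primrec.fst.comp .snd)) (Primrec.snd.comp .fst)
  exact violated.listFilter.comp (primrec_list_product range_fst range_fst) .id

lemma primrec_foldr_natPair {L : α → List β} {g : α → β → ℕ} (c d : ℕ) (hL : Primrec L)
    (hg : Primrec₂ g) :
    Primrec fun a ↦ (L a).foldr (fun b k ↦ Nat.pair c (Nat.pair (g a b) k)) d :=
  Primrec.list_foldr (h := fun a p ↦ Nat.pair c (Nat.pair (g a p.1) p.2)) hL (.const d) <|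
    Primrec₂.natPair.comp (.const c) <| Primrec₂.natPair.comp
      (hg.comp .fst (Primrec.fst.comp .snd)) (Primrec.snd.comp .snd)

lemma primrec_encode_conj {m : ℕ} {hm : m ≤ 2} {L : α → List β} {f : α → β → F m}
    (hL : Primrec L) (hf : Primrec₂ fun a b ↦ encode (f a b)) :
    Primrec fun a ↦ encode (F.conj hm ((L a).map (f a))) := by
  refine (primrec_foldr_natPair 4 (encode (.not (.fls hm) : F m)) hL hf).of_eq fun a ↦ ?_
  induction L a with
  | nil => rfl
  | cons b l ih => exact congrArg (fun k ↦ Nat.pair 4 (Nat.pair (encode (f a b)) k)) ih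

lemma primrec_encode_disj {m : ℕ} {hm : m ≤ 2} {L : α → List β} {f : α → β → F m}
    (hL : Primrec L) (hf : Primrec₂ fun a b ↦ encode (f a b)) :
    Primrec fun a ↦ encode (F.disj hm ((L a).map (f a))) := by
  refine (primrec_foldr_natPair 5 (encode (.fls hm : F m)) hL hf).of_eq fun a ↦ ?_
  induction L a with
  | nil => rfl
  | cons b l ih => exact congrArg (fun k ↦ Nat.pair 5 (Nat.pair (encode (f a b)) k)) ih

lemma primrec_encode_conjAll {ι : Type} [Finite ι] {f : α → ι → F 0}
    (hf : ∀ i, Primrec fun a ↦ encode (f a i)) : Primrec fun a ↦ encode (F.conjAll (f a)) := by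
  unfold F.conjAll
  induction (Set.finite_univ (α := ι)).toFinset.toList with
  | nil => exact .const _
  | cons i l ih => exact Primrec₂.natPair.comp (.const _) (Primrec₂.natPair.comp (hf i) ih)

lemma primrec_encode_mark_inr {i : α → ℕ} (hi : Primrec i) {m : ℕ} {h₁ : 1 ≤ m} {h₂ : m ≤ 2} :
    Primrec fun a ↦ encode (F.mark (.inr (i a)) h₁ h₂) :=
  Primrec₂.natPair.comp (.const _) (Primrec.nat_double_succ.comp hi)

lemma primrec_encode_not {m : ℕ} {φ : α → F m} (hφ : Primrec fun a ↦ encode (φ a)) :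
    Primrec fun a ↦ encode (.not (φ a)) :=
  Primrec₂.natPair.comp (.const _) hφ

lemma primrec_encode_and {m : ℕ} {φ ψ : α → F m} (hφ : Primrec fun a ↦ encode (φ a))
    (hψ : Primrec fun a ↦ encode (ψ a)) : Primrec fun a ↦ encode (.and (φ a) (ψ a)) :=
  Primrec₂.natPair.comp (.const _) (Primrec₂.natPair.comp hφ hψ)

lemma primrec_encode_imp {m : ℕ} {φ ψ : α → F m} (hφ : Primrec fun a ↦ encode (φ a))
    (hψ : Primrec fun a ↦ encode (ψ a)) : Primrec fun a ↦ encode (.imp (φ a) (ψ a)) :=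
  Primrec₂.natPair.comp (.const _) (Primrec₂.natPair.comp hφ hψ)

lemma primrec_encode_all {m : ℕ} {hm : m ≤ 1} {φ : α → F (m + 1)}
    (hφ : Primrec fun a ↦ encode (φ a)) : Primrec fun a ↦ encode (.all hm (φ a)) :=
  Primrec₂.natPair.comp (.const _) hφ

lemma primrec_encode_guardedAll {φ : α → F 1} {c : ZMod 3} {ψ : α → F 2}
    (hφ : Primrec fun a ↦ encode (φ a)) (hψ : Primrec fun a ↦ encode (ψ a)) :
    Primrec fun a ↦ encode (F.guardedAll (φ a) c (ψ a)) :=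
  primrec_encode_all (primrec_encode_imp hφ
    (primrec_encode_all (primrec_encode_imp (.const _) hψ)))

lemma primrec_encode_compatible (D : Label → ZMod 3 → Label → Prop) {L : α → List (ℕ × ℕ)}
    (hL : Primrec L) : Primrec fun a ↦ encode (F.compatible D (L a)) := by
  refine primrec_encode_conjAll fun d ↦ primrec_encode_conj hL (primrec_encode_guardedAll ?_ ?_)
  · exact primrec_encode_and (.const _) (primrec_encode_mark_inr (Primrec.fst.comp .snd))
  · exact primrec_encode_imp (.const _)
      (primrec_encode_not (primrec_encode_mark_inr (Primrec.snd.comp .snd)))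

lemma primrec_encode_tiling {n : α → ℕ} {h v : α → List (ℕ × ℕ)} (hn : Primrec n)
    (hh : Primrec h) (hv : Primrec v) : Primrec fun a ↦ encode (F.tiling (n a) (h a) (v a)) := by
  have existsTile : Primrec fun a ↦ encode (F.tiling.existsTile (n a)) :=
    primrec_encode_all (primrec_encode_disj (Primrec.list_range.comp hn)
      (primrec_encode_mark_inr Primrec.snd))
  have west : Primrec fun a ↦ encode (F.compatible (CellPair (-1) (-1)) ((h a).map Prod.swap)) :=
    primrec_encode_compatible _ (.list_map hh
      (Primrec.pair (Primrec.snd.comp .snd) (Primrec.fst.comp .snd)))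
  have north : Primrec fun a ↦
      encode (F.conjAll fun s ↦ F.compatible (CellPair s (-s)) (v a)) :=
    primrec_encode_conjAll fun s ↦ primrec_encode_compatible _ hv
  exact primrec_encode_and (.const _) <| primrec_encode_and existsTile <|
    primrec_encode_and (primrec_encode_compatible _ hh) <| primrec_encode_and west <|
    primrec_encode_and north (.const _)

end Primrec

/-- the reduction in the proof of Theorem 7.  There is a computable
map assigning to each tiling system `𝒞` a sentence `η_𝒞` of FL²3T such that `η_𝒞` is
satisfiable (in a structure where the three distinguished relations are transitive) if
and only if `𝒞` tiles `ℕ × ℕ`. -/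
theorem tiling_reduction_to_flutedThreeTrans :
    ∃ g : ℕ → ℕ, Computable g ∧
      ∀ T : TileSys, ∃ η : F 0,
        g T.encode = encode η ∧ (Satisfiable η ↔ T.TilesNat) := by
  let sentence (n h v : ℕ) : F 0 := F.tiling n (forbiddenPairs n h) (forbiddenPairs n v)
  have primrec_sentence : Primrec fun z : ℕ ↦
      encode (sentence z.unpair.1 z.unpair.2.unpair.1 z.unpair.2.unpair.2) := by
    have primrec_n : Primrec fun z : ℕ ↦ z.unpair.1 := Primrec.fst.comp .unpair
    have primrec_constraints : Primrec fun z : ℕ ↦ z.unpair.2.unpair :=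
      Primrec.unpair.comp (Primrec.snd.comp .unpair)
    exact primrec_encode_tiling primrec_n
      (primrec_forbiddenPairs.comp primrec_n (Primrec.fst.comp primrec_constraints))
      (primrec_forbiddenPairs.comp primrec_n (Primrec.snd.comp primrec_constraints))
  refine ⟨_, primrec_sentence.to_comp, fun T ↦ ⟨_, rfl, ?_⟩⟩
  simp only [TileSys.encode, Nat.unpair_pair]
  exact satisfiable_tiling_iff (listsForbidden_forbiddenPairs T.H)
    (listsForbidden_forbiddenPairs T.V)

end FlutedThreeTrans
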